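/- Every connected weighted graph G on n vertices and every set 𝒫 ⊆ V × V of vertex pairs admits a subgraph H of G with at most C·n·|𝒫|^{2/7} edges (for a universal constant C) such that d_H(s,t) ≤ d_G(s,t) + 4·W(s,t) for every pair (s,t) ∈ 𝒫. -/

import Mathlib

open scoped ENNReal Classical

/-- The total weight of a walk: the sum of the weights of its edges. -/
noncomputable def walkWeight {V : Type} (G : SimpleGraph V) (w : Sym2 V → ℝ≥0∞)
    {s t : V} (p : G.Walk s t) : ℝ≥0∞ :=
  (p.edges.map w).sum

/-- Shortest-path distance in the weighted graph `(G, w)`, equal to `⊤` if there is no path. -/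
noncomputable def gdist {V : Type} (G : SimpleGraph V) (w : Sym2 V → ℝ≥0∞)
    (s t : V) : ℝ≥0∞ :=
  ⨅ p : G.Walk s t, walkWeight G w p

/-- The maximum edge weight along a walk (0 for the trivial walk). -/
noncomputable def maxEdge {V : Type} (G : SimpleGraph V) (w : Sym2 V → ℝ≥0∞)
    {s t : V} (p : G.Walk s t) : ℝ≥0∞ :=
  (p.edges.map w).foldr max 0

/-- `π` assigns to each ordered vertex pair a shortest path: a walk whose total
weight equals the shortest-path distance. -/
def IsShortestPathScheme {V : Type} (G : SimpleGraph V) (w : Sym2 V → ℝ≥0∞)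
    (π : (s t : V) → G.Walk s t) : Prop :=
  ∀ s t : V, walkWeight G w (π s t) = gdist G w s t

/-- The edge weights are positive and finite on all edges of `G`. -/
def PosWeights {V : Type} (G : SimpleGraph V) (w : Sym2 V → ℝ≥0∞) : Prop :=
  ∀ e ∈ G.edgeSet, 0 < w e ∧ w e ≠ ⊤

section spannerAux
open Finset

variable {V : Type}

lemma gdist_le_walk (G : SimpleGraph V) (w : Sym2 V → ℝ≥0∞) {s t : V} (p : G.Walk s t) :
    gdist G w s t ≤ walkWeight G w p := iInf_le _ p

lemma gdist_self (G : SimpleGraph V) (w : Sym2 V → ℝ≥0∞) (s : V) : gdist G w s s = 0 := by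
  have h := gdist_le_walk G w (SimpleGraph.Walk.nil : G.Walk s s)
  simpa [walkWeight] using h

lemma gdist_adj (G : SimpleGraph V) (w : Sym2 V → ℝ≥0∞) {s t : V} (h : G.Adj s t) :
    gdist G w s t ≤ w s(s, t) := by
  have h := gdist_le_walk G w (SimpleGraph.Walk.cons h SimpleGraph.Walk.nil)
  simpa [walkWeight] using h

lemma gdist_triangle (G : SimpleGraph V) (w : Sym2 V → ℝ≥0∞) (s x t : V) :
    gdist G w s t ≤ gdist G w s x + gdist G w x t := by
  unfold gdist
  refine ENNReal.le_iInf_add_iInf ?_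
  intro p q
  refine (iInf_le _ (p.append q)).trans ?_
  simp [walkWeight, SimpleGraph.Walk.edges_append]

lemma gdist_comm_le (G : SimpleGraph V) (w : Sym2 V → ℝ≥0∞) (s t : V) :
    gdist G w s t ≤ gdist G w t s := by
  unfold gdist
  refine le_iInf fun p => (iInf_le _ p.reverse).trans ?_
  simp [walkWeight, SimpleGraph.Walk.edges_reverse]

lemma gdist_comm (G : SimpleGraph V) (w : Sym2 V → ℝ≥0∞) (s t : V) :
    gdist G w s t = gdist G w t s := le_antisymm (gdist_comm_le _ _ _ _) (gdist_comm_le _ _ _ _)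

lemma gdist_mono {G H : SimpleGraph V} (hGH : G ≤ H) (w : Sym2 V → ℝ≥0∞) (s t : V) :
    gdist H w s t ≤ gdist G w s t := by
  unfold gdist
  refine le_iInf fun p => (iInf_le _ (p.mapLe hGH)).trans ?_
  simp [walkWeight]

/-- distance along a sequence of vertices -/
lemma gdist_seq (H : SimpleGraph V) (w : Sym2 V → ℝ≥0∞) (q : ℕ → V) (i j : ℕ) (hij : i ≤ j)
    (h : ∀ k, i ≤ k → k < j → H.Adj (q k) (q (k+1))) :
    gdist H w (q i) (q j) ≤ ∑ k ∈ Ico i j, w s(q k, q (k+1)) := by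
  induction j, hij using Nat.le_induction with
  | base => simp [gdist_self]
  | succ j hij ih =>
    rw [Finset.sum_Ico_succ_top hij]
    refine (gdist_triangle H w _ (q j) _).trans ?_
    gcongr
    · exact ih fun k h1 h2 => h k h1 (by omega)
    · exact gdist_adj H w (h j hij (by omega))

/-- `q 0, …, q L` is a shortest path -/
def IsSP (G : SimpleGraph V) (w : Sym2 V → ℝ≥0∞) (q : ℕ → V) (L : ℕ) : Prop :=
  (∀ k < L, G.Adj (q k) (q (k+1))) ∧
    ∑ k ∈ Ico 0 L, w s(q k, q (k+1)) = gdist G w (q 0) (q L)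

lemma walk_sum (G : SimpleGraph V) (w : Sym2 V → ℝ≥0∞) {s t : V} (p : G.Walk s t) :
    walkWeight G w p = ∑ k ∈ range p.length, w s(p.getVert k, p.getVert (k+1)) := by
  induction p with
  | nil => simp [walkWeight]
  | cons h p ih =>
    simp only [walkWeight, SimpleGraph.Walk.edges_cons, List.map_cons, List.sum_cons,
      SimpleGraph.Walk.length_cons] at ih ⊢
    rw [Finset.sum_range_succ', ih, add_comm]
    simp

lemma le_foldr_max (l : List ℝ≥0∞) (x : ℝ≥0∞) (hx : x ∈ l) : x ≤ l.foldr max 0 := by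
  induction l with
  | nil => simp at hx
  | cons a l ih =>
    simp only [List.foldr_cons]
    rcases List.mem_cons.1 hx with rfl | h
    · exact le_max_left _ _
    · exact (ih h).trans (le_max_right _ _)

lemma getVert_edge_mem {G : SimpleGraph V} {s t : V} (p : G.Walk s t) :
    ∀ k < p.length, s(p.getVert k, p.getVert (k+1)) ∈ p.edges := by
  induction p with
  | nil => simp
  | cons h p ih =>
    intro k hk
    rw [SimpleGraph.Walk.edges_cons]
    cases k with
    | zero => simp
    | succ k =>
      refine List.mem_cons_of_mem _ ?_
      simpa using ih k (by simpa using hk)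

lemma exists_seq (G : SimpleGraph V) (w : Sym2 V → ℝ≥0∞)
    (π : (s t : V) → G.Walk s t) (hπ : IsShortestPathScheme G w π) (s t : V) :
    ∃ (q : ℕ → V) (L : ℕ), q 0 = s ∧ q L = t ∧ IsSP G w q L ∧
      ∀ k < L, w s(q k, q (k+1)) ≤ maxEdge G w (π s t) := by
  refine ⟨(π s t).getVert, (π s t).length, by simp, by simp, ⟨?_, ?_⟩, ?_⟩
  · intro k hk
    exact (π s t).adj_getVert_succ hk
  · rw [← Finset.range_eq_Ico, ← walk_sum]
    simpa using hπ s t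
  · intro k hk
    refine le_foldr_max _ _ (List.mem_map.2 ⟨_, ?_, rfl⟩)
    exact getVert_edge_mem _ k hk

lemma sum_ne_top {G : SimpleGraph V} {w : Sym2 V → ℝ≥0∞} (hw : PosWeights G w) {q : ℕ → V} {L : ℕ}
    (hq : IsSP G w q L) (i j : ℕ) (hj : j ≤ L) :
    ∑ k ∈ Ico i j, w s(q k, q (k+1)) ≠ ⊤ := by
  refine ENNReal.sum_ne_top.2 fun k hk => ?_
  rw [Finset.mem_Ico] at hk
  exact (hw _ (hq.1 k (by omega))).2

lemma gdist_lower {G : SimpleGraph V} {w : Sym2 V → ℝ≥0∞} (hw : PosWeights G w) {q : ℕ → V} {L : ℕ}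
    (hq : IsSP G w q L) (i j : ℕ) (hij : i ≤ j) (hj : j ≤ L) :
    ∑ k ∈ Ico i j, w s(q k, q (k+1)) ≤ gdist G w (q i) (q j) := by
  have h1 := gdist_seq G w q 0 i (by omega) (fun k _ h => hq.1 k (by omega))
  have h2 := gdist_seq G w q j L (by omega) (fun k _ h => hq.1 k (by omega))
  have h3 := gdist_triangle G w (q 0) (q i) (q L)
  have h4 := gdist_triangle G w (q i) (q j) (q L)
  have h5 := hq.2
  rw [← Finset.sum_Ico_consecutive _ (Nat.zero_le i) (hij.trans hj),
    ← Finset.sum_Ico_consecutive _ hij hj] at h5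
  have f1 := sum_ne_top hw hq 0 i (by omega)
  have f2 := sum_ne_top hw hq j L le_rfl
  have h6 : ∑ k ∈ Ico 0 i, w s(q k, q (k+1)) + (∑ k ∈ Ico i j, w s(q k, q (k+1)) +
      ∑ k ∈ Ico j L, w s(q k, q (k+1))) ≤ ∑ k ∈ Ico 0 i, w s(q k, q (k+1)) +
      (gdist G w (q i) (q j) + ∑ k ∈ Ico j L, w s(q k, q (k+1))) := by
    rw [h5]
    exact h3.trans (add_le_add h1 (h4.trans (add_le_add le_rfl h2)))
  exact (ENNReal.add_le_add_iff_right f2).1 ((ENNReal.add_le_add_iff_left f1).1 h6)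

lemma IsSP.reverse {G : SimpleGraph V} {w : Sym2 V → ℝ≥0∞} {q : ℕ → V} {L : ℕ}
    (hq : IsSP G w q L) : IsSP G w (fun k => q (L - k)) L := by
  constructor
  · intro k hk
    have := (hq.1 (L - (k+1)) (by omega)).symm
    rwa [show L - (k+1) + 1 = L - k by omega] at this
  · have := hq.2
    simp only [Nat.sub_zero, Nat.sub_self]
    rw [gdist_comm, ← this, ← Finset.range_eq_Ico, ← Finset.sum_range_reflect]
    refine Finset.sum_congr rfl fun k hk => ?_
    rw [Finset.mem_range] at hk
    rw [Sym2.eq_swap, show L - 1 - k + 1 = L - k by omega, show L - 1 - k = L - (k+1) by omega,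
      show L - (L - k) = k by omega, show L - (L - (k+1)) = k + 1 by omega]

/-- the `d` lightest elements -/
lemma exists_light (S : Finset V) (f : V → ℝ≥0∞) (d : ℕ) :
    ∃ T ⊆ S, T.card ≤ d ∧ ∀ v ∈ S, v ∉ T → T.card = d ∧ ∀ x ∈ T, f x ≤ f v := by
  induction d with
  | zero => exact ⟨∅, by simp, by simp, by simp⟩
  | succ d ih =>
    obtain ⟨T, hTS, hc, hT⟩ := ih
    by_cases hne : (S \ T).Nonempty
    · obtain ⟨m, hm, hmin⟩ := Finset.exists_min_image (S \ T) f hne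
      rw [Finset.mem_sdiff] at hm
      have hcard : (insert m T).card = T.card + 1 := Finset.card_insert_of_notMem hm.2
      refine ⟨insert m T, Finset.insert_subset hm.1 hTS, by omega, ?_⟩
      intro v hv hvT
      rw [Finset.mem_insert, not_or] at hvT
      have h1 := hT v hv hvT.2
      refine ⟨by omega, ?_⟩
      intro x hx
      rcases Finset.mem_insert.1 hx with rfl | hx
      · exact hmin v (Finset.mem_sdiff.2 ⟨hv, hvT.2⟩)
      · exact h1.2 x hx
    · refine ⟨T, hTS, by omega, ?_⟩
      intro v hv hvT
      exact absurd ⟨v, Finset.mem_sdiff.2 ⟨hv, hvT⟩⟩ hne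

/-- Hypotheses on the light neighbourhoods `N` and the light edge set `E1`. -/
structure Light (G : SimpleGraph V) (w : Sym2 V → ℝ≥0∞) (N : V → Finset V)
    (E1 : Finset (Sym2 V)) (d : ℕ) : Prop where
  mem : ∀ u, ∀ x ∈ N u, s(u, x) ∈ E1
  sub : ∀ e ∈ E1, e ∈ G.edgeSet
  miss : ∀ u v, G.Adj u v → s(u, v) ∉ E1 →
    d ≤ (N u).card ∧ ∀ x ∈ N u, w s(u, x) ≤ w s(u, v)

lemma exists_Light [Fintype V] (G : SimpleGraph V) (w : Sym2 V → ℝ≥0∞) (d : ℕ) :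
    ∃ N E1, Light G w N E1 d ∧ E1.card ≤ Fintype.card V * d := by
  choose N hN hc hm using fun u : V => exists_light (G.neighborFinset u) (fun x => w s(u, x)) d
  refine ⟨N, Finset.univ.biUnion fun u => (N u).image fun x => s(u, x), ⟨?_, ?_, ?_⟩, ?_⟩
  · intro u x hx
    simp only [Finset.mem_biUnion, Finset.mem_image]
    exact ⟨u, Finset.mem_univ _, x, hx, rfl⟩
  · intro e he
    simp only [Finset.mem_biUnion, Finset.mem_image] at he
    obtain ⟨u, _, x, hx, rfl⟩ := he
    simpa using hN u hx
  · intro u v huv hne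
    have := hm u v (by simpa using huv) (fun hv => hne (by
      simp only [Finset.mem_biUnion, Finset.mem_image]
      exact ⟨u, Finset.mem_univ _, v, hv, rfl⟩))
    exact ⟨this.1.ge, this.2⟩
  · refine (Finset.card_biUnion_le_card_mul _ _ d ?_).trans (by simp)
    intro u _
    exact Finset.card_image_le.trans (hc u)

/-- neighbourhood of a shortest path with many missing edges -/
lemma nbhd {G : SimpleGraph V} {w : Sym2 V → ℝ≥0∞} (hw : PosWeights G w) {N : V → Finset V}
    {E1 : Finset (Sym2 V)} {d : ℕ} (hl : Light G w N E1 d) {q : ℕ → V} {L : ℕ} (hq : IsSP G w q L)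
    (W : ℝ≥0∞) (hW : ∀ k < L, w s(q k, q (k+1)) ≤ W) (n0 : ℕ) (hn0 : n0 ≤ L) :
    ∃ A : Finset V, d * ((range n0).filter fun k => s(q k, q (k+1)) ∉ E1).card ≤ 3 * A.card ∧
      ∀ x ∈ A, ∃ g < n0, s(q g, x) ∈ E1 ∧ w s(q g, x) ≤ W := by
  set M := (range n0).filter fun k => s(q k, q (k+1)) ∉ E1 with hM
  have hMm : ∀ k, k ∈ M ↔ k < n0 ∧ s(q k, q (k+1)) ∉ E1 := by intro k; simp [hM]
  have key : ∀ k ∈ M, ∃ g ≤ k, (∀ k' ∈ M, k' < k → k' < g) ∧ d ≤ (N (q g)).card ∧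
      (∀ x ∈ N (q g), w s(q g, x) ≤ w s(q k, q (k+1))) ∧
      ((∃ k' ∈ M, k' < k) → ∃ r ∈ M, r < k ∧ (∀ k' ∈ M, k' < k → k' ≤ r) ∧
        ∀ x ∈ N (q g), w s(q g, x) ≤ w s(q r, q (r+1))) := by
    intro k hk
    have hk' := (hMm k).1 hk
    have ml := hl.miss _ _ (hq.1 k (by omega)) hk'.2
    by_cases hp : ∃ k' ∈ M, k' < k
    · have hne : (M.filter (· < k)).Nonempty := by
        obtain ⟨k', h1, h2⟩ := hp
        exact ⟨k', Finset.mem_filter.2 ⟨h1, h2⟩⟩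
      obtain ⟨r, hr, hrmax⟩ := Finset.exists_max_image _ id hne
      rw [Finset.mem_filter] at hr
      have hrmax' : ∀ k' ∈ M, k' < k → k' ≤ r := fun k' h1 h2 =>
        hrmax k' (Finset.mem_filter.2 ⟨h1, h2⟩)
      have hr' := (hMm r).1 hr.1
      by_cases hle : w s(q k, q (k+1)) ≤ w s(q r, q (r+1))
      · exact ⟨k, le_rfl, fun _ _ h => h, ml.1, ml.2, fun _ => ⟨r, hr.1, hr.2, hrmax',
          fun x hx => (ml.2 x hx).trans hle⟩⟩
      · have mr := hl.miss (q (r+1)) (q r) (hq.1 r (by omega)).symm (by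
          rw [Sym2.eq_swap]; exact hr'.2)
        rw [Sym2.eq_swap (a := q (r+1)) (b := q r)] at mr
        exact ⟨r+1, hr.2, fun k' h1 h2 => Nat.lt_succ_of_le (hrmax' k' h1 h2), mr.1,
          fun x hx => (mr.2 x hx).trans (le_of_not_ge hle),
          fun _ => ⟨r, hr.1, hr.2, hrmax', mr.2⟩⟩
    · exact ⟨k, le_rfl, fun _ _ h => h, ml.1, ml.2, fun h => absurd h hp⟩
  choose! g hgk hgM hgd hgw hgr using key
  refine ⟨M.biUnion fun k => N (q (g k)), ?_, ?_⟩
  · rw [mul_comm d, mul_comm 3]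
    refine Finset.card_mul_le_card_mul (fun k x => x ∈ N (q (g k))) ?_ ?_
    · intro k hk
      refine (hgd k hk).trans (Finset.card_le_card ?_)
      intro x hx
      rw [Finset.mem_bipartiteAbove]
      exact ⟨Finset.mem_biUnion.2 ⟨k, hk, hx⟩, hx⟩
    · intro x _
      by_contra hcon
      push Not at hcon
      set S := Finset.bipartiteBelow (fun k x => x ∈ N (q (g k))) M x with hS
      have hSm : ∀ k, k ∈ S ↔ k ∈ M ∧ x ∈ N (q (g k)) := by
        intro k; rw [hS, Finset.mem_bipartiteBelow]
      -- four elements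
      have hlt : ∀ i j : Fin S.card, i < j → S.orderEmbOfFin rfl i < S.orderEmbOfFin rfl j :=
        fun i j h => (S.orderEmbOfFin rfl).strictMono h
      have hmemS : ∀ i : Fin S.card, S.orderEmbOfFin rfl i ∈ S := fun i =>
        Finset.orderEmbOfFin_mem S rfl i
      obtain ⟨k1, k2, k3, k4, h12, h23, h34, m1, m2, m3, m4⟩ :
          ∃ k1 k2 k3 k4, k1 < k2 ∧ k2 < k3 ∧ k3 < k4 ∧ k1 ∈ S ∧ k2 ∈ S ∧ k3 ∈ S ∧ k4 ∈ S :=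
        ⟨_, _, _, _, hlt ⟨0, by omega⟩ ⟨1, by omega⟩ (by simp),
          hlt ⟨1, by omega⟩ ⟨2, by omega⟩ (by simp),
          hlt ⟨2, by omega⟩ ⟨3, by omega⟩ (by simp), hmemS _, hmemS _, hmemS _, hmemS _⟩
      rw [hSm] at m1 m2 m3 m4
      obtain ⟨r, hrM, hrk, hrmax, hrw⟩ := hgr k4 m4.1 ⟨k3, m3.1, h34⟩
      have hk3r := hrmax k3 m3.1 h34
      have hrg := hgM k4 m4.1 r hrM hrk
      have hg1 := hgk k1 m1.1
      have hg4 := hgk k4 m4.1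
      have hk4 := ((hMm k4).1 m4.1).1
      have hlow := gdist_lower hw hq (g k1) (g k4) (by omega) (by omega)
      have hup : gdist G w (q (g k1)) (q (g k4)) ≤
          w s(q k1, q (k1+1)) + w s(q r, q (r+1)) := by
        refine (gdist_triangle G w _ x _).trans (add_le_add ?_ ?_)
        · refine (gdist_adj G w ?_).trans (hgw k1 m1.1 x m1.2)
          exact hl.sub _ (hl.mem _ _ m1.2)
        · rw [gdist_comm]
          refine (gdist_adj G w ?_).trans (hrw x m4.2)
          exact hl.sub _ (hl.mem _ _ m4.2)
      have hsub : ({k1, k2, r} : Finset ℕ) ⊆ Ico (g k1) (g k4) := by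
        intro k hk
        simp only [Finset.mem_insert, Finset.mem_singleton] at hk
        rw [Finset.mem_Ico]
        omega
      have hsum := Finset.sum_le_sum_of_subset (f := fun k => w s(q k, q (k+1))) hsub
      rw [Finset.sum_insert (by simp; omega), Finset.sum_insert (by simp; omega),
        Finset.sum_singleton] at hsum
      have p1 := hw s(q k1, q (k1+1)) (hq.1 k1 (by omega))
      have p2 := hw s(q k2, q (k2+1)) (hq.1 k2 (by omega))
      have pr := hw s(q r, q (r+1)) (hq.1 r (by omega))
      have h := (ENNReal.add_le_add_iff_left p1.2).1 (hsum.trans (hlow.trans hup))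
      have h' : w s(q k2, q (k2+1)) + w s(q r, q (r+1)) ≤ 0 + w s(q r, q (r+1)) := by simpa using h
      have := (ENNReal.add_le_add_iff_right pr.2).1 h'
      exact absurd p2.1 (not_lt.2 this)
  · intro x hx
    obtain ⟨k, hk, hx⟩ := Finset.mem_biUnion.1 hx
    have := ((hMm k).1 hk).1
    have := hgk k hk
    exact ⟨g k, by omega, hl.mem _ _ hx, (hgw k hk x hx).trans (hW k (by omega))⟩

/-- the subgraph with a given finite edge set -/
def gE (E : Finset (Sym2 V)) : SimpleGraph V := SimpleGraph.fromEdgeSet (E : Set (Sym2 V))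

lemma gE_adj {G : SimpleGraph V} {E : Finset (Sym2 V)} {u v : V} (h : G.Adj u v)
    (he : s(u, v) ∈ E) : (gE E).Adj u v := by
  simp [gE, he, h.ne]

lemma gE_mono {E E' : Finset (Sym2 V)} (h : E ⊆ E') : gE E ≤ gE E' :=
  SimpleGraph.fromEdgeSet_mono (by exact_mod_cast h)

lemma gE_le {G : SimpleGraph V} {E : Finset (Sym2 V)} (h : ∀ e ∈ E, e ∈ G.edgeSet) :
    gE E ≤ G := by
  intro u v huv
  simp only [gE, SimpleGraph.fromEdgeSet_adj] at huv
  exact h _ huv.1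

lemma gE_ncard (E : Finset (Sym2 V)) : (gE E).edgeSet.ncard ≤ E.card := by
  rw [← Set.ncard_coe_finset]
  refine Set.ncard_le_ncard ?_ (Finset.finite_toSet E)
  rw [gE, SimpleGraph.edgeSet_fromEdgeSet]
  exact Set.sdiff_subset

/-- shortest path tree -/
lemma exists_tree [Fintype V] {G : SimpleGraph V} {w : Sym2 V → ℝ≥0∞} (hw : PosWeights G w)
    (π : (s t : V) → G.Walk s t) (hπ : IsShortestPathScheme G w π) (x : V) :
    ∃ T : Finset (Sym2 V), T.card ≤ Fintype.card V ∧ (∀ e ∈ T, e ∈ G.edgeSet) ∧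
      ∀ v, gdist (gE T) w x v ≤ gdist G w x v := by
  have par : ∀ v, v ≠ x → ∃ u, G.Adj u v ∧ gdist G w x u + w s(u, v) ≤ gdist G w x v ∧
      gdist G w x u < gdist G w x v := by
    intro v hv
    obtain ⟨q, L, h0, hL, hq, -⟩ := exists_seq G w π hπ x v
    cases L with
    | zero => exact absurd (hL.symm.trans h0) hv
    | succ L =>
      have h1 := gdist_seq G w q 0 L (by omega) (fun k _ h => hq.1 k (by omega))
      have h2 := hq.2
      rw [Finset.sum_Ico_succ_top (by omega)] at h2
      have hp := hw s(q L, q (L+1)) (hq.1 L (by omega))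
      have hf := sum_ne_top hw hq 0 L (by omega)
      have h3 : gdist G w (q 0) (q L) + w s(q L, q (L+1)) ≤ gdist G w (q 0) (q (L+1)) := by
        rw [← h2]; gcongr
      rw [h0, hL] at h3
      refine ⟨q L, hL ▸ hq.1 L (by omega), h3, lt_of_lt_of_le ?_ h3⟩
      rw [hL] at hp
      rw [h0] at h1
      exact ENNReal.lt_add_right (ne_top_of_le_ne_top hf h1) hp.1.ne'
  choose! f hf1 hf2 hf3 using par
  refine ⟨(Finset.univ.filter fun v => v ≠ x).image fun v => s(f v, v), ?_, ?_, ?_⟩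
  · exact Finset.card_image_le.trans (Finset.card_le_univ _)
  · intro e he
    simp only [Finset.mem_image, Finset.mem_filter, Finset.mem_univ, true_and] at he
    obtain ⟨v, hv, rfl⟩ := he
    exact hf1 v hv
  · have wf : WellFounded (fun a b : V => gdist G w x a < gdist G w x b) := by
      have : IsTrans V (fun a b : V => gdist G w x a < gdist G w x b) := ⟨fun _ _ _ => lt_trans⟩
      have : Std.Irrefl (fun a b : V => gdist G w x a < gdist G w x b) := ⟨fun _ => lt_irrefl _⟩
      exact Finite.wellFounded_of_trans_of_irrefl _
    intro v
    induction v using wf.induction with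
    | _ v ih =>
      by_cases hv : v = x
      · subst hv; simp [gdist_self]
      · refine (gdist_triangle _ w x (f v) v).trans (le_trans ?_ (hf2 v hv))
        refine add_le_add (ih _ (hf3 v hv)) (gdist_adj _ w (gE_adj (hf1 v hv) ?_))
        simp only [Finset.mem_image, Finset.mem_filter, Finset.mem_univ, true_and]
        exact ⟨v, hv, rfl⟩

/-- initial segment lemma -/
lemma exists_initial {G : SimpleGraph V} {w : Sym2 V → ℝ≥0∞} (hw : PosWeights G w) {N : V → Finset V}
    {E1 : Finset (Sym2 V)} {d : ℕ} (hl : Light G w N E1 d) {q : ℕ → V} {L : ℕ} (hq : IsSP G w q L)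
    (W : ℝ≥0∞) (hW : ∀ k < L, w s(q k, q (k+1)) ≤ W) (l : ℕ) :
    ∃ F : Finset (Sym2 V), F.card ≤ l ∧ (∀ e ∈ F, e ∈ G.edgeSet) ∧
      ((∀ k < L, s(q k, q (k+1)) ∈ E1 ∪ F) ∨
        ∃ a ≤ L, (∀ k < a, s(q k, q (k+1)) ∈ E1 ∪ F) ∧
          ∃ A : Finset V, d * (l+1) ≤ 3 * A.card ∧
            ∀ x ∈ A, ∃ g ≤ a, s(q g, x) ∈ E1 ∧ w s(q g, x) ≤ W) := by
  let M : ℕ → Finset ℕ := fun n0 => (range n0).filter fun k => s(q k, q (k+1)) ∉ E1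
  have hF : ∀ a ≤ L, (M a).card ≤ l → ∃ F : Finset (Sym2 V), F.card ≤ l ∧
      (∀ e ∈ F, e ∈ G.edgeSet) ∧ ∀ k < a, s(q k, q (k+1)) ∈ E1 ∪ F := by
    intro a ha hc
    refine ⟨(M a).image fun k => s(q k, q (k+1)), Finset.card_image_le.trans hc, ?_, ?_⟩
    · intro e he
      simp only [M, Finset.mem_image, Finset.mem_filter, Finset.mem_range] at he
      obtain ⟨k, hk, rfl⟩ := he
      exact hq.1 k (by omega)
    · intro k hk
      by_cases h : s(q k, q (k+1)) ∈ E1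
      · exact Finset.mem_union_left _ h
      · refine Finset.mem_union_right _ (Finset.mem_image.2 ⟨k, ?_, rfl⟩)
        simp [M, hk, h]
  by_cases hc : (M L).card ≤ l
  · obtain ⟨F, h1, h2, h3⟩ := hF L le_rfl hc
    exact ⟨F, h1, h2, Or.inl h3⟩
  · have hex : ∃ n0, l + 1 ≤ (M n0).card := ⟨L, by omega⟩
    obtain ⟨n0, hn0, hmin⟩ : ∃ n0, l + 1 ≤ (M n0).card ∧ ∀ m < n0, ¬ l + 1 ≤ (M m).card :=
      ⟨Nat.find hex, Nat.find_spec hex, fun m hm => Nat.find_min hex hm⟩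
    have hnL : n0 ≤ L := by
      by_contra h
      exact hmin L (by omega) (by omega)
    cases n0 with
    | zero => simp [M] at hn0
    | succ a =>
      obtain ⟨F, h1, h2, h3⟩ := hF a (by omega) (by have := hmin a (by omega); omega)
      obtain ⟨A, hA, hA'⟩ := nbhd hw hl hq W hW (a+1) hnL
      refine ⟨F, h1, h2, Or.inr ⟨a, by omega, h3, A, ?_, ?_⟩⟩
      · exact (Nat.mul_le_mul_left d hn0).trans hA
      · intro x hx
        obtain ⟨g, hg, h⟩ := hA' x hx
        exact ⟨g, by omega, h⟩

lemma gdist_gE_seq {G : SimpleGraph V} (w : Sym2 V → ℝ≥0∞) {q : ℕ → V} {L : ℕ}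
    (hq : IsSP G w q L) (E : Finset (Sym2 V)) (i j : ℕ) (hij : i ≤ j) (hj : j ≤ L)
    (h : ∀ k, i ≤ k → k < j → s(q k, q (k+1)) ∈ E) :
    gdist (gE E) w (q i) (q j) ≤ ∑ k ∈ Ico i j, w s(q k, q (k+1)) :=
  gdist_seq _ w q i j hij fun k h1 h2 => gE_adj (hq.1 k (by omega)) (h k h1 h2)

/-- what happens for a single pair -/
lemma pair_lemma {G : SimpleGraph V} {w : Sym2 V → ℝ≥0∞} (hw : PosWeights G w) {N : V → Finset V}
    {E1 : Finset (Sym2 V)} {d : ℕ} (hl : Light G w N E1 d)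
    (π : (s t : V) → G.Walk s t) (hπ : IsShortestPathScheme G w π) (l K : ℕ) (s t : V) :
    ∃ (F : Finset (Sym2 V)) (A B : Finset V) (Mid : Finset (Sym2 V)), F.card ≤ 2 * l ∧ (∀ e ∈ F, e ∈ G.edgeSet) ∧
      Mid.card ≤ K ∧ (∀ e ∈ Mid, e ∈ G.edgeSet) ∧
      (gdist (gE (E1 ∪ F)) w s t ≤ gdist G w s t ∨
       (d * (K+1) ≤ 3 * A.card ∧ ∀ x ∈ A, gdist G w s x + gdist G w x t ≤
          gdist G w s t + 4 * maxEdge G w (π s t)) ∨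
       (d * (l+1) ≤ 3 * A.card ∧ d * (l+1) ≤ 3 * B.card ∧ ∀ x ∈ A, ∀ y ∈ B,
          gdist (gE (E1 ∪ F)) w s x + gdist (gE (E1 ∪ F ∪ Mid)) w x y +
            gdist (gE (E1 ∪ F)) w y t ≤ gdist G w s t + 4 * maxEdge G w (π s t))) := by
  obtain ⟨q, L, h0, hL, hq, hW⟩ := exists_seq G w π hπ s t
  set W := maxEdge G w (π s t) with hWdef
  have htot : ∑ k ∈ Ico 0 L, w s(q k, q (k+1)) = gdist G w s t := by rw [hq.2, h0, hL]
  by_cases hK : K + 1 ≤ ((range L).filter fun k => s(q k, q (k+1)) ∉ E1).card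
  · obtain ⟨A, hA, hA'⟩ := nbhd hw hl hq W hW L le_rfl
    refine ⟨∅, A, ∅, ∅, by simp, by simp, by simp, by simp, Or.inr (Or.inl ⟨?_, ?_⟩)⟩
    · exact (Nat.mul_le_mul_left d hK).trans hA
    · intro x hx
      obtain ⟨g, hg, hgE, hgW⟩ := hA' x hx
      have hadj : G.Adj (q g) x := hl.sub _ hgE
      have h1 := gdist_seq G w q 0 g (by omega) (fun k _ h => hq.1 k (by omega))
      have h2 := gdist_seq G w q g L (by omega) (fun k _ h => hq.1 k (by omega))
      have h3 := (gdist_adj G w hadj).trans hgW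
      have h4 := gdist_triangle G w s (q g) x
      have h5 := gdist_triangle G w x (q g) t
      rw [gdist_comm G w x (q g)] at h5
      rw [h0] at h1
      rw [hL] at h2
      rw [← htot, ← Finset.sum_Ico_consecutive _ (Nat.zero_le g) hg.le]
      calc _ ≤ _ := add_le_add h4 h5
        _ ≤ _ := add_le_add (add_le_add h1 h3) (add_le_add h3 h2)
        _ = ∑ k ∈ Ico 0 g, w s(q k, q (k+1)) + ∑ k ∈ Ico g L, w s(q k, q (k+1)) + 2 * W := by ring
        _ ≤ _ := by gcongr; norm_num
  · have hrev := hq.reverse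
    have hWrev : ∀ k < L, w s((fun k => q (L - k)) k, (fun k => q (L - k)) (k+1)) ≤ W := by
      intro k hk
      have := hW (L - (k+1)) (by omega)
      rw [show L - (k+1) + 1 = L - k by omega, Sym2.eq_swap] at this
      exact this
    have hback : ∀ (a : ℕ) (E : Finset (Sym2 V)), a ≤ L →
        (∀ k < a, s((fun k => q (L - k)) k, (fun k => q (L - k)) (k+1)) ∈ E) →
        ∀ k, L - a ≤ k → k < L → s(q k, q (k+1)) ∈ E := by
      intro a E ha h k hk1 hk2
      have := h (L - (k+1)) (by omega)
      simp only at this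
      rw [show L - (L - (k+1)) = k + 1 by omega, show L - (L - (k+1) + 1) = k by omega,
        Sym2.eq_swap] at this
      exact this
    obtain ⟨F, hF1, hF2, hF3⟩ := exists_initial hw hl hq W hW l
    obtain ⟨F', hF1', hF2', hF3'⟩ := exists_initial hw hl hrev W hWrev l
    have hcard : (F ∪ F').card ≤ 2 * l := (Finset.card_union_le _ _).trans (by omega)
    have hsub : ∀ e ∈ F ∪ F', e ∈ G.edgeSet := by
      intro e he
      rcases Finset.mem_union.1 he with h | h
      exacts [hF2 e h, hF2' e h]
    have i1 : E1 ∪ F ⊆ E1 ∪ (F ∪ F') := Finset.union_subset_union_right Finset.subset_union_left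
    have i2 : E1 ∪ F' ⊆ E1 ∪ (F ∪ F') := Finset.union_subset_union_right Finset.subset_union_right
    have full : (∀ k < L, s(q k, q (k+1)) ∈ E1 ∪ (F ∪ F')) →
        gdist (gE (E1 ∪ (F ∪ F'))) w s t ≤ gdist G w s t := by
      intro h
      have := gdist_gE_seq w hq (E1 ∪ (F ∪ F')) 0 L (by omega) le_rfl (fun k _ hk => h k hk)
      rwa [htot, h0, hL] at this
    set Mid := ((range L).filter fun k => s(q k, q (k+1)) ∉ E1).image fun k => s(q k, q (k+1))
      with hMid
    have hMidE : ∀ k < L, s(q k, q (k+1)) ∈ E1 ∪ (F ∪ F') ∪ Mid := by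
      intro k hk
      by_cases h : s(q k, q (k+1)) ∈ E1
      · simp [h]
      · refine Finset.mem_union_right _ (Finset.mem_image.2 ⟨k, ?_, rfl⟩)
        simp [hk, h]
    have hMid1 : Mid.card ≤ K := Finset.card_image_le.trans (by omega)
    have hMid2 : ∀ e ∈ Mid, e ∈ G.edgeSet := by
      intro e he
      simp only [hMid, Finset.mem_image, Finset.mem_filter, Finset.mem_range] at he
      obtain ⟨k, hk, rfl⟩ := he
      exact hq.1 k (by omega)
    rcases hF3 with hall | ⟨a, haL, ha, A, hA, hA'⟩
    · exact ⟨F ∪ F', ∅, ∅, Mid, hcard, hsub, hMid1, hMid2, Or.inl (full fun k hk => i1 (hall k hk))⟩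
    rcases hF3' with hall | ⟨b, hbL, hb, B, hB, hB'⟩
    · refine ⟨F ∪ F', ∅, ∅, Mid, hcard, hsub, hMid1, hMid2, Or.inl (full fun k hk => i2 ?_)⟩
      exact hback L _ le_rfl hall k (by omega) hk
    have hb2 := hback b _ hbL hb
    by_cases hab : L - b ≤ a
    · refine ⟨F ∪ F', ∅, ∅, Mid, hcard, hsub, hMid1, hMid2, Or.inl (full fun k hk => ?_)⟩
      by_cases hka : k < a
      · exact i1 (ha k hka)
      · exact i2 (hb2 k (by omega) hk)
    · refine ⟨F ∪ F', A, B, Mid, hcard, hsub, hMid1, hMid2, Or.inr (Or.inr ⟨hA, hB, ?_⟩)⟩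
      intro x hx y hy
      obtain ⟨g, hg, hgE, hgW⟩ := hA' x hx
      obtain ⟨g', hg', hgE', hgW'⟩ := hB' y hy
      obtain ⟨j, hj1, hj2⟩ : ∃ j, j = L - g' ∧ L - b ≤ j := ⟨_, rfl, by omega⟩
      rw [← hj1] at hgE' hgW'
      have hjL : j ≤ L := by omega
      have e1 : (gE (E1 ∪ (F ∪ F'))).Adj (q g) x := gE_adj (G := G) (hl.sub _ hgE) (by simp [hgE])
      have e2 : (gE (E1 ∪ (F ∪ F'))).Adj (q j) y := gE_adj (G := G) (hl.sub _ hgE') (by simp [hgE'])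
      have hm : gE (E1 ∪ (F ∪ F')) ≤ gE (E1 ∪ (F ∪ F') ∪ Mid) := gE_mono Finset.subset_union_left
      have c1 := gdist_gE_seq w hq (E1 ∪ (F ∪ F')) 0 g (by omega) (by omega)
        (fun k _ hk => i1 (ha k (by omega)))
      have c2 := gdist_gE_seq w hq (E1 ∪ (F ∪ F') ∪ Mid) g j (by omega) (by omega)
        (fun k _ hk => hMidE k (by omega))
      have c3 := gdist_gE_seq w hq (E1 ∪ (F ∪ F')) j L (by omega) le_rfl
        (fun k h1 hk => i2 (hb2 k (by omega) hk))
      rw [h0] at c1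
      rw [hL] at c3
      have a1 := (gdist_adj _ w e1).trans hgW
      have a2 := (gdist_adj _ w e2).trans hgW'
      have a1' := (gdist_adj _ w (hm e1)).trans hgW
      have a2' := (gdist_adj _ w (hm e2)).trans hgW'
      have t1 := gdist_triangle (gE (E1 ∪ (F ∪ F'))) w s (q g) x
      have t2 := gdist_triangle (gE (E1 ∪ (F ∪ F') ∪ Mid)) w x (q g) y
      have t3 := gdist_triangle (gE (E1 ∪ (F ∪ F') ∪ Mid)) w (q g) (q j) y
      have t4 := gdist_triangle (gE (E1 ∪ (F ∪ F'))) w y (q j) t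
      rw [gdist_comm _ w x (q g)] at t2
      rw [gdist_comm _ w y (q j)] at t4
      rw [← htot, ← Finset.sum_Ico_consecutive _ (Nat.zero_le g) (show g ≤ L by omega),
        ← Finset.sum_Ico_consecutive _ (show g ≤ j by omega) hjL]
      calc _ ≤ (∑ k ∈ Ico 0 g, w s(q k, q (k+1)) + W) +
            (W + (∑ k ∈ Ico g j, w s(q k, q (k+1)) + W)) +
            (W + ∑ k ∈ Ico j L, w s(q k, q (k+1))) :=
            add_le_add (add_le_add (t1.trans (add_le_add c1 a1))
              (t2.trans (add_le_add a1' (t3.trans (add_le_add c2 a2')))))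
              (t4.trans (add_le_add a2 c3))
        _ = _ := by ring

/-- greedy partial hitting set -/
lemma greedy [Fintype V] [Nonempty V] {ι : Type} (Q : Finset ι) (A : ι → Finset V) (α : ℝ) (hα : α ≤ 1)
    (hA : ∀ i ∈ Q, α * Fintype.card V ≤ (A i).card) (r : ℕ) :
    ∃ R : Finset V, R.card ≤ r ∧
      ((Q.filter fun i => Disjoint (A i) R).card : ℝ) ≤ (1 - α) ^ r * Q.card := by
  induction r with
  | zero => exact ⟨∅, by simp, by simp⟩
  | succ r ih =>
    obtain ⟨R, hR, hU⟩ := ih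
    set U := Q.filter fun i => Disjoint (A i) R with hUdef
    have hpos : (0:ℝ) ≤ 1 - α := by linarith
    -- there is a vertex in many sets
    have : ∃ R' : Finset V, R'.card ≤ R.card + 1 ∧ R ⊆ R' ∧
        ((U.filter fun i => Disjoint (A i) R').card : ℝ) ≤ (1 - α) * U.card := by
      have hdc : ∑ v : V, ((U.filter fun i => v ∈ A i).card : ℝ) = ∑ i ∈ U, ((A i).card : ℝ) := by
        have := Finset.sum_card_bipartiteAbove_eq_sum_card_bipartiteBelow
          (s := (Finset.univ : Finset V)) (t := U) (fun v i => v ∈ A i)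
        have h2 : ∀ i, Finset.bipartiteBelow (fun v i => v ∈ A i) (Finset.univ : Finset V) i
          = A i := by intro i; ext v; simp [Finset.bipartiteBelow]
        simp only [h2] at this
        exact_mod_cast this
      have hlow : ∑ v : V, (α * U.card : ℝ) ≤ ∑ v : V, ((U.filter fun i => v ∈ A i).card : ℝ) := by
        rw [hdc]
        have : ∑ i ∈ U, (α * Fintype.card V) ≤ ∑ i ∈ U, ((A i).card : ℝ) :=
          Finset.sum_le_sum fun i hi => hA i (Finset.mem_of_mem_filter i hi)
        simp only [Finset.sum_const, nsmul_eq_mul, Finset.card_univ] at this ⊢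
        linarith
      obtain ⟨v, -, hv⟩ := Finset.exists_le_of_sum_le Finset.univ_nonempty hlow
      refine ⟨insert v R, Finset.card_insert_le _ _, Finset.subset_insert _ _, ?_⟩
      have hsplit := Finset.card_filter_add_card_filter_not (s := U) (fun i => v ∈ A i)
      have hle : (U.filter fun i => Disjoint (A i) (insert v R)).card ≤
          (U.filter fun i => ¬ v ∈ A i).card := by
        refine Finset.card_le_card fun i hi => ?_
        rw [Finset.mem_filter] at hi ⊢
        exact ⟨hi.1, fun h => (Finset.disjoint_left.1 hi.2 h) (Finset.mem_insert_self _ _)⟩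
      have h1 : ((U.filter fun i => v ∈ A i).card : ℝ) + ((U.filter fun i => ¬ v ∈ A i).card : ℝ)
        = U.card := by exact_mod_cast hsplit
      have h2 : ((U.filter fun i => Disjoint (A i) (insert v R)).card : ℝ) ≤
          ((U.filter fun i => ¬ v ∈ A i).card : ℝ) := by exact_mod_cast hle
      linarith
    obtain ⟨R', h1, h2, h3⟩ := this
    refine ⟨R', by omega, ?_⟩
    have h4 : (Q.filter fun i => Disjoint (A i) R') ⊆ U.filter fun i => Disjoint (A i) R' := by
      intro i hi
      rw [Finset.mem_filter] at hi
      refine Finset.mem_filter.2 ⟨Finset.mem_filter.2 ⟨hi.1, ?_⟩, hi.2⟩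
      exact Finset.disjoint_of_subset_right h2 hi.2
    have h5 : ((Q.filter fun i => Disjoint (A i) R').card : ℝ) ≤
      ((U.filter fun i => Disjoint (A i) R').card : ℝ) := by exact_mod_cast Finset.card_le_card h4
    rw [pow_succ]
    nlinarith [mul_le_mul_of_nonneg_left hU hpos]

lemma hitting [Fintype V] [Nonempty V] {ι : Type} (Q : Finset ι) (A : ι → Finset V) (z : ℝ)
    (hz : 1 ≤ z) (hA : ∀ i ∈ Q, (Fintype.card V : ℝ) ≤ 3 * z * (A i).card) :
    ∃ R : Finset V, (R.card : ℝ) ≤ 7 * z ∧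
      4 * ((Q.filter fun i => Disjoint (A i) R).card : ℝ) ≤ Q.card := by
  have hz0 : 0 < z := by linarith
  have hle : 1 / (3 * z) ≤ 1 := by rw [div_le_one (by positivity)]; linarith
  obtain ⟨R, hR, h⟩ := greedy Q A (1 / (3 * z)) hle (by
    intro i hi
    rw [div_mul_eq_mul_div, div_le_iff₀ (by positivity), one_mul, mul_comm]
    exact hA i hi) ⌈6 * z⌉₊
  refine ⟨R, ?_, ?_⟩
  · have h1 := (Nat.ceil_lt_add_one (show 0 ≤ 6 * z by positivity)).le
    have h2 : (R.card : ℝ) ≤ (⌈6 * z⌉₊ : ℝ) := by exact_mod_cast hR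
    linarith
  · have hexp : (1 - 1 / (3 * z)) ^ ⌈6 * z⌉₊ ≤ 1 / 4 := by
      have h1 : 1 - 1 / (3 * z) ≤ Real.exp (-(1 / (3 * z))) := Real.one_sub_le_exp_neg _
      calc (1 - 1 / (3 * z)) ^ ⌈6 * z⌉₊ ≤ Real.exp (-(1 / (3 * z))) ^ ⌈6 * z⌉₊ :=
            pow_le_pow_left₀ (by linarith) h1 _
        _ = Real.exp (⌈6 * z⌉₊ * -(1 / (3 * z))) := by rw [Real.exp_nat_mul]
        _ ≤ Real.exp (-2) := by
          rw [Real.exp_le_exp]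
          have := Nat.le_ceil (6 * z)
          have h2 : (2:ℝ) ≤ ⌈6 * z⌉₊ * (1 / (3 * z)) := by
            rw [mul_one_div, le_div_iff₀ (by positivity)]; linarith
          linarith
        _ ≤ 1 / 4 := by
          rw [Real.exp_neg, ← one_div]
          refine one_div_le_one_div_of_le (by norm_num) ?_
          have := Real.exp_one_gt_d9
          rw [show (2:ℝ) = 1 + 1 by norm_num, Real.exp_add]
          nlinarith
    have : (0:ℝ) ≤ Q.card := by positivity
    nlinarith

lemma round_lemma [Fintype V] [Nonempty V] {G : SimpleGraph V} {w : Sym2 V → ℝ≥0∞}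
    (hw : PosWeights G w) (π : (s t : V) → G.Walk s t) (hπ : IsShortestPathScheme G w π)
    (P : Finset (V × V)) (y : ℝ) (hy : 1 ≤ y) (hyP : y ^ 7 = P.card) :
    ∃ E : Finset (Sym2 V), (∀ e ∈ E, e ∈ G.edgeSet) ∧
      (E.card : ℝ) ≤ 60 * Fintype.card V * y ^ 2 ∧
      4 * ((P.filter fun i => ¬ gdist (gE E) w i.1 i.2 ≤
        gdist G w i.1 i.2 + 4 * maxEdge G w (π i.1 i.2)).card : ℝ) ≤ 3 * P.card := by
  have hy0 : 0 < y := by linarith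
  set n : ℝ := ((Fintype.card V : ℕ) : ℝ) with hn
  have hn0 : 0 ≤ n := by positivity
  obtain ⟨d, hd⟩ : ∃ d, d = ⌈y ^ 2⌉₊ := ⟨_, rfl⟩
  obtain ⟨l, hl⟩ : ∃ l, l = ⌊n / y ^ 5⌋₊ := ⟨_, rfl⟩
  obtain ⟨K, hK⟩ : ∃ K, K = ⌊n / y ^ 4⌋₊ := ⟨_, rfl⟩
  have hd1 : y ^ 2 ≤ d := by rw [hd]; exact Nat.le_ceil _
  have hy2 : 1 ≤ y ^ 2 := one_le_pow₀ hy
  have hd2 : (d : ℝ) ≤ 2 * y ^ 2 := by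
    have := (Nat.ceil_lt_add_one (show 0 ≤ y ^ 2 by positivity)).le
    rw [hd]; linarith
  have hl1 : n / y ^ 5 ≤ l + 1 := by rw [hl]; exact (Nat.lt_floor_add_one _).le
  have hl2 : (l : ℝ) ≤ n / y ^ 5 := by rw [hl]; exact Nat.floor_le (by positivity)
  have hK1 : n / y ^ 4 ≤ K + 1 := by rw [hK]; exact (Nat.lt_floor_add_one _).le
  have hK2 : (K : ℝ) ≤ n / y ^ 4 := by rw [hK]; exact Nat.floor_le (by positivity)
  obtain ⟨N, E1, hL, hE1⟩ := exists_Light G w d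
  choose F A B Mid hF1 hF2 hM1 hM2 hcase using
    fun i : V × V => pair_lemma hw hL π hπ l K i.1 i.2
  choose T hT1 hT2 hT3 using exists_tree hw π hπ
  set Q2 := P.filter fun i => (d * (K+1) ≤ 3 * (A i).card ∧ ∀ x ∈ A i,
    gdist G w i.1 x + gdist G w x i.2 ≤ gdist G w i.1 i.2 + 4 * maxEdge G w (π i.1 i.2)) with hQ2
  set Q1 := P.filter fun i => (d * (l+1) ≤ 3 * (A i).card ∧ d * (l+1) ≤ 3 * (B i).card ∧
    ∀ x ∈ A i, ∀ y ∈ B i,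
          gdist (gE (E1 ∪ F i)) w i.1 x + gdist (gE (E1 ∪ F i ∪ Mid i)) w x y +
            gdist (gE (E1 ∪ F i)) w y i.2 ≤
            gdist G w i.1 i.2 + 4 * maxEdge G w (π i.1 i.2)) with hQ1
  have szl : ∀ c : ℕ, d * (l+1) ≤ 3 * c → n ≤ 3 * y ^ 3 * c := by
    intro c hc
    have hc' : (d : ℝ) * (l + 1) ≤ 3 * c := by exact_mod_cast hc
    have h1 : y ^ 2 * (n / y ^ 5) ≤ 3 * c := by
      refine le_trans ?_ hc'
      gcongr
    have h2 : y ^ 2 * (n / y ^ 5) = n / y ^ 3 := by field_simp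
    rw [h2, div_le_iff₀ (by positivity)] at h1
    linarith
  have szK : ∀ c : ℕ, d * (K+1) ≤ 3 * c → n ≤ 3 * y ^ 2 * c := by
    intro c hc
    have hc' : (d : ℝ) * (K + 1) ≤ 3 * c := by exact_mod_cast hc
    have h1 : y ^ 2 * (n / y ^ 4) ≤ 3 * c := by
      refine le_trans ?_ hc'
      gcongr
    have h2 : y ^ 2 * (n / y ^ 4) = n / y ^ 2 := by field_simp
    rw [h2, div_le_iff₀ (by positivity)] at h1
    linarith
  obtain ⟨R2, hR2, hR2'⟩ := hitting Q2 A (y ^ 2) hy2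
    (fun i hi => szK _ (Finset.mem_filter.1 hi).2.1)
  obtain ⟨RA, hRA, hRA'⟩ := hitting Q1 A (y ^ 3) (one_le_pow₀ hy)
    (fun i hi => szl _ (Finset.mem_filter.1 hi).2.1)
  obtain ⟨RB, hRB, hRB'⟩ := hitting Q1 B (y ^ 3) (one_le_pow₀ hy)
    (fun i hi => szl _ (Finset.mem_filter.1 hi).2.2.1)
  set E0 := E1 ∪ P.biUnion F with hE0
  have hsubF : ∀ i ∈ P, E1 ∪ F i ⊆ E0 := fun i hi =>
    Finset.union_subset_union_right (Finset.subset_biUnion_of_mem F hi)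
  obtain ⟨j, hj⟩ : ∃ j : V × V → V × V, Q1.Nonempty → ∀ x, ∀ i ∈ Q1,
      gdist (gE (E0 ∪ Mid (j x))) w x.1 x.2 ≤ gdist (gE (E0 ∪ Mid i)) w x.1 x.2 := by
    by_cases hne : Q1.Nonempty
    · choose j hj using fun x : V × V =>
        Finset.exists_min_image Q1 (fun i => gdist (gE (E0 ∪ Mid i)) w x.1 x.2) hne
      exact ⟨j, fun _ x i hi => (hj x).2 i hi⟩
    · exact ⟨id, fun h => absurd h hne⟩
  set E := E0 ∪ R2.biUnion T ∪ (RA ×ˢ RB).biUnion (fun x => Mid (j x)) with hE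
  have hE0E : E0 ⊆ E := fun e he => by simp only [hE, Finset.mem_union]; tauto
  have hTE : ∀ x ∈ R2, T x ⊆ E := fun x hx e he => by
    simp only [hE, Finset.mem_union]
    exact Or.inl (Or.inr (Finset.mem_biUnion.2 ⟨x, hx, he⟩))
  have hME : ∀ x ∈ RA, ∀ z ∈ RB, E0 ∪ Mid (j (x, z)) ⊆ E := fun x hx z hz =>
    Finset.union_subset hE0E fun e he => by
      simp only [hE, Finset.mem_union]
      exact Or.inr (Finset.mem_biUnion.2 ⟨(x, z), Finset.mem_product.2 ⟨hx, hz⟩, he⟩)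
  refine ⟨E, ?_, ?_, ?_⟩
  · intro e he
    simp only [hE, hE0, Finset.mem_union, Finset.mem_biUnion] at he
    rcases he with ((h | ⟨i, _, h⟩) | ⟨x, _, h⟩) | ⟨x, _, h⟩
    exacts [hL.sub e h, hF2 i e h, hT2 x e h, hM2 _ e h]
  · have c1 : (E1.card : ℝ) ≤ n * d := by rw [hn]; exact_mod_cast hE1
    have c2 : ((P.biUnion F).card : ℝ) ≤ P.card * (2 * l) := by
      exact_mod_cast Finset.card_biUnion_le_card_mul P F (2 * l) (fun i _ => hF1 i)
    have c3 : ((R2.biUnion T).card : ℝ) ≤ R2.card * n := by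
      rw [hn]
      exact_mod_cast Finset.card_biUnion_le_card_mul R2 T _ (fun i _ => hT1 i)
    have c4 : (((RA ×ˢ RB).biUnion (fun x => Mid (j x))).card : ℝ) ≤ RA.card * RB.card * K := by
      have := Finset.card_biUnion_le_card_mul (RA ×ˢ RB) (fun x => Mid (j x)) K
        (fun i _ => hM1 _)
      rw [Finset.card_product] at this
      exact_mod_cast this
    have c5 : (E.card : ℝ) ≤ E1.card + (P.biUnion F).card + (R2.biUnion T).card +
        ((RA ×ˢ RB).biUnion (fun x => Mid (j x))).card := by
      have := (Finset.card_union_le (E0 ∪ R2.biUnion T)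
        ((RA ×ˢ RB).biUnion (fun x => Mid (j x))))
      have h2 := Finset.card_union_le E0 (R2.biUnion T)
      have h3 := Finset.card_union_le E1 (P.biUnion F)
      rw [← hE] at this
      rw [← hE0] at h3
      exact_mod_cast (by omega : E.card ≤ E1.card + (P.biUnion F).card + (R2.biUnion T).card +
        ((RA ×ˢ RB).biUnion (fun x => Mid (j x))).card)
    have b1 : n * d ≤ n * (2 * y ^ 2) := by gcongr
    have b2 : (P.card : ℝ) * (2 * l) ≤ 2 * n * y ^ 2 := by
      calc (P.card : ℝ) * (2 * l) ≤ P.card * (2 * (n / y ^ 5)) := by gcongr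
        _ = 2 * n * y ^ 2 := by rw [← hyP]; field_simp
    have b3 : (R2.card : ℝ) * n ≤ 7 * y ^ 2 * n := by gcongr
    have b4 : (RA.card : ℝ) * RB.card * K ≤ 49 * n * y ^ 2 := by
      calc (RA.card : ℝ) * RB.card * K ≤ (7 * y ^ 3) * (7 * y ^ 3) * (n / y ^ 4) := by gcongr
        _ = 49 * n * y ^ 2 := by field_simp; ring
    linarith
  · have hbad : (P.filter fun i => ¬ gdist (gE E) w i.1 i.2 ≤
        gdist G w i.1 i.2 + 4 * maxEdge G w (π i.1 i.2)) ⊆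
        (Q2.filter fun i => Disjoint (A i) R2) ∪ ((Q1.filter fun i => Disjoint (A i) RA) ∪
          (Q1.filter fun i => Disjoint (B i) RB)) := by
      intro i hi
      rw [Finset.mem_filter] at hi
      obtain ⟨hiP, hi⟩ := hi
      by_contra hcon
      simp only [Finset.mem_union, Finset.mem_filter, not_or, not_and] at hcon
      obtain ⟨g2, gA, gB⟩ := hcon
      apply hi
      have m0 : ∀ u v, gdist (gE E) w u v ≤ gdist (gE (E1 ∪ F i)) w u v := fun u v =>
        gdist_mono (gE_mono ((hsubF i hiP).trans hE0E)) w u v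
      rcases hcase i with h | h | h
      · exact (m0 _ _).trans (h.trans le_self_add)
      · have hmem : i ∈ Q2 := Finset.mem_filter.2 ⟨hiP, h⟩
        obtain ⟨x, hxA, hxR⟩ := Finset.not_disjoint_iff.1 (g2 hmem)
        refine le_trans ?_ (h.2 x hxA)
        refine (gdist_triangle _ w _ x _).trans (add_le_add ?_ ?_)
        · rw [gdist_comm _ w _ x, gdist_comm G w _ x]
          exact (gdist_mono (gE_mono (hTE x hxR)) w _ _).trans (hT3 x _)
        · exact (gdist_mono (gE_mono (hTE x hxR)) w _ _).trans (hT3 x _)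
      · have hmem : i ∈ Q1 := Finset.mem_filter.2 ⟨hiP, h⟩
        obtain ⟨x, hxA, hxR⟩ := Finset.not_disjoint_iff.1 (gA hmem)
        obtain ⟨z, hzB, hzR⟩ := Finset.not_disjoint_iff.1 (gB hmem)
        refine le_trans ?_ (h.2.2 x hxA z hzB)
        refine (gdist_triangle _ w _ z _).trans (add_le_add ?_ (m0 _ _))
        refine (gdist_triangle _ w _ x _).trans (add_le_add (m0 _ _) ?_)
        refine (gdist_mono (gE_mono (hME x hxR z hzR)) w _ _).trans ?_
        refine (hj ⟨i, hmem⟩ (x, z) i hmem).trans ?_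
        exact gdist_mono (gE_mono (Finset.union_subset_union_left (hsubF i hiP))) w _ _
    have k1 := Finset.card_le_card hbad
    have k2 := Finset.card_union_le (Q2.filter fun i => Disjoint (A i) R2)
      ((Q1.filter fun i => Disjoint (A i) RA) ∪ (Q1.filter fun i => Disjoint (B i) RB))
    have k3 := Finset.card_union_le (Q1.filter fun i => Disjoint (A i) RA)
      (Q1.filter fun i => Disjoint (B i) RB)
    have k4 : ((P.filter fun i => ¬ gdist (gE E) w i.1 i.2 ≤
        gdist G w i.1 i.2 + 4 * maxEdge G w (π i.1 i.2)).card : ℝ) ≤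
        (Q2.filter fun i => Disjoint (A i) R2).card +
        ((Q1.filter fun i => Disjoint (A i) RA).card +
        (Q1.filter fun i => Disjoint (B i) RB).card) := by
      exact_mod_cast k1.trans (k2.trans (Nat.add_le_add_left k3 _))
    have q1 : (Q1.card : ℝ) ≤ P.card := by exact_mod_cast Finset.card_filter_le _ _
    have q2 : (Q2.card : ℝ) ≤ P.card := by exact_mod_cast Finset.card_filter_le _ _
    linarith

lemma full_lemma [Fintype V] [Nonempty V] {G : SimpleGraph V} {w : Sym2 V → ℝ≥0∞}
    (hw : PosWeights G w) (π : (s t : V) → G.Walk s t) (hπ : IsShortestPathScheme G w π)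
    (m : ℕ) : ∀ P : Finset (V × V), P.card = m →
    ∃ E : Finset (Sym2 V), (∀ e ∈ E, e ∈ G.edgeSet) ∧
      (E.card : ℝ) ≤ 900 * Fintype.card V * (P.card : ℝ) ^ ((2 : ℝ) / 7) ∧
      ∀ i ∈ P, gdist (gE E) w i.1 i.2 ≤
        gdist G w i.1 i.2 + 4 * maxEdge G w (π i.1 i.2) := by
  induction m using Nat.strong_induction_on with
  | _ m ih =>
    intro P hP
    by_cases hm : m = 0
    · have : P = ∅ := by rw [← Finset.card_eq_zero]; omega
      subst this
      exact ⟨∅, by simp, by simp, by simp⟩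
    have hp1 : (1:ℝ) ≤ P.card := by
      have : 1 ≤ P.card := by omega
      exact_mod_cast this
    have hy : (1:ℝ) ≤ (P.card : ℝ) ^ ((1:ℝ) / 7) := Real.one_le_rpow hp1 (by norm_num)
    have hy7 : ((P.card : ℝ) ^ ((1:ℝ) / 7)) ^ 7 = P.card := by
      rw [← Real.rpow_natCast, ← Real.rpow_mul (by linarith)]; norm_num
    have hy2 : ((P.card : ℝ) ^ ((1:ℝ) / 7)) ^ 2 = (P.card : ℝ) ^ ((2:ℝ) / 7) := by
      rw [← Real.rpow_natCast, ← Real.rpow_mul (by linarith)]; norm_num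
    obtain ⟨E, hE1, hE2, hE3⟩ := round_lemma hw π hπ P _ hy hy7
    rw [hy2] at hE2
    set P' := P.filter fun i => ¬ gdist (gE E) w i.1 i.2 ≤
        gdist G w i.1 i.2 + 4 * maxEdge G w (π i.1 i.2) with hP'
    have hlt : P'.card < m := by
      have : 4 * P'.card ≤ 3 * P.card := by exact_mod_cast hE3
      omega
    obtain ⟨E', hE1', hE2', hE3'⟩ := ih _ hlt P' rfl
    refine ⟨E ∪ E', ?_, ?_, ?_⟩
    · intro e he
      rcases Finset.mem_union.1 he with h | h
      exacts [hE1 e h, hE1' e h]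
    · have h1 : ((E ∪ E').card : ℝ) ≤ E.card + E'.card := by
        exact_mod_cast Finset.card_union_le _ _
      have h2 : (P'.card : ℝ) ^ ((2 : ℝ) / 7) ≤ (93/100) * (P.card : ℝ) ^ ((2 : ℝ) / 7) := by
        have hc : ((3:ℝ)/4) ^ ((2:ℝ)/7) ≤ 93/100 := by
          have h7 : (((3:ℝ)/4) ^ ((2:ℝ)/7)) ^ 7 ≤ (93/100) ^ 7 := by
            rw [← Real.rpow_natCast, ← Real.rpow_mul (by norm_num)]
            norm_num
          exact le_of_pow_le_pow_left₀ (by norm_num) (by norm_num) h7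
        calc (P'.card : ℝ) ^ ((2 : ℝ) / 7) ≤ (3 / 4 * P.card) ^ ((2 : ℝ) / 7) := by
              refine Real.rpow_le_rpow (by positivity) (by linarith) (by norm_num)
          _ = (3/4) ^ ((2:ℝ)/7) * (P.card : ℝ) ^ ((2 : ℝ) / 7) :=
              Real.mul_rpow (by norm_num) (by positivity)
          _ ≤ _ := by gcongr
      have hn0 : (0:ℝ) ≤ 900 * Fintype.card V := by positivity
      have h3 := mul_le_mul_of_nonneg_left h2 hn0
      have h4 : (0:ℝ) ≤ (Fintype.card V : ℝ) * (P.card : ℝ) ^ ((2 : ℝ) / 7) := by positivity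
      nlinarith
    · intro i hi
      by_cases hb : i ∈ P'
      · exact (gdist_mono (gE_mono Finset.subset_union_right) w _ _).trans (hE3' i hb)
      · refine (gdist_mono (gE_mono Finset.subset_union_left) w _ _).trans ?_
        by_contra h
        exact hb (Finset.mem_filter.2 ⟨hi, h⟩)

end spannerAux

/-- Every connected weighted graph `G` on `n` vertices and every set
`𝒫 ⊆ V × V` of vertex pairs admits a subgraph `H` of `G` on at most `C·n·|𝒫|^(2/7)` edges
(for a universal constant `C`) with `d_H(s,t) ≤ d_G(s,t) + 4·W(s,t)` for all `(s,t) ∈ 𝒫`. -/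
theorem pairwise_four_W_spanner :
    ∃ C : ℝ, 0 < C ∧
      ∀ (V : Type) [Fintype V] (G : SimpleGraph V) (w : Sym2 V → ℝ≥0∞),
        G.Connected → PosWeights G w →
        ∀ π : (s t : V) → G.Walk s t, IsShortestPathScheme G w π →
          ∀ P : Set (V × V),
            ∃ H : SimpleGraph V, H ≤ G ∧
              (H.edgeSet.ncard : ℝ) ≤
                C * (Fintype.card V : ℝ) * (P.ncard : ℝ) ^ ((2 : ℝ) / 7) ∧
              ∀ s t : V, (s, t) ∈ P →
                gdist H w s t ≤ gdist G w s t + 4 * maxEdge G w (π s t) := by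
  refine ⟨900, by norm_num, ?_⟩
  intro V _ G w hG hw π hπ P
  have : Nonempty V := hG.nonempty
  obtain ⟨E, h1, h2, h3⟩ := full_lemma hw π hπ _ P.toFinite.toFinset rfl
  refine ⟨gE E, gE_le h1, ?_, ?_⟩
  · rw [Set.ncard_eq_toFinset_card P P.toFinite]
    exact le_trans (by exact_mod_cast gE_ncard E) h2
  · intro s t hst
    exact h3 (s, t) (by simpa using hst)
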